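/- (Ratio of ₂F₁(1/3,1/3;1;·) at conjugate arguments.) One has ₂F₁(1/3, 1/3; 1; (√3 + 2)/(3√3)) = 2^{1/3} · (√3 − 1)^{1/3} · ₂F₁(1/3, 1/3; 1; (√3 − 2)/(3√3)). (Both arguments lie in (−1,1), so both hypergeometric series converge absolutely.) -/

import Mathlib

open Real

/-- Gauss hypergeometric function ₂F₁ defined via its power series
    (the tsum; converges absolutely for |z| < 1). -/
noncomputable def hyp2F1 (a b c z : ℝ) : ℝ :=
  ∑' n : ℕ, ((ascPochhammer ℝ n).eval a * (ascPochhammer ℝ n).eval b /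
      (ascPochhammer ℝ n).eval c) * z ^ n / (Nat.factorial n)

/-!
Write `F = ₂F₁(1/3, 1/3; 1; ·)`. Ramanujan's quadratic transformation in signature three,
`₂F₁(1/3, 2/3; 1; α) = (1 + p) ₂F₁(1/3, 2/3; 1; β)` with `α = p (3 + p)² / (2 (1 + p)³)` and
`β = p² (3 + p) / 4`, becomes `F (z p) = m p * F (w p)` under Pfaff's substitution
`x ↦ x / (x - 1)`, where `m p = (2 (1 - p) / (2 + p)) ^ (1 / 3)`. Both sides solve one and the same
Sturm–Liouville equation `(P y')' = Q y`. Since `P 0 = 0`, their Wronskian vanishes, so they are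
proportional, and they agree at `p = 0`. At `p = √3 - 2` the points `z p` and `w p` are the two
conjugate arguments.
-/

lemma mem_eball_zero_one_iff {E : Type*} [SeminormedAddCommGroup E] {x : E} :
    x ∈ Metric.eball 0 1 ↔ ‖x‖ < 1 := by
  rw [← ENNReal.ofReal_one, Metric.eball_ofReal, mem_ball_zero_iff]

section PowerSeries

open FormalMultilinearSeries

variable {𝕜 : Type*} [NontriviallyNormedField 𝕜] {f : 𝕜 → 𝕜} {a : ℕ → 𝕜} {x z s : 𝕜} {r : ENNReal}

lemma hasFPowerSeriesOnBall_deriv_ofScalars [CompleteSpace 𝕜]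
    (hf : HasFPowerSeriesOnBall f (ofScalars 𝕜 a) x r) :
    HasFPowerSeriesOnBall (deriv f) (ofScalars 𝕜 fun n ↦ (n + 1) * a (n + 1)) x r := by
  have h_series : ofScalars 𝕜 (fun n ↦ (n + 1) * a (n + 1)) =
      (ContinuousLinearMap.apply 𝕜 𝕜 (1 : 𝕜)).compFormalMultilinearSeries
        (ofScalars 𝕜 a).derivSeries := by
    ext n
    simp [apply_eq_prod_smul_coeff, -smul_eq_mul]
  rw [h_series]
  exact (ContinuousLinearMap.apply 𝕜 𝕜 (1 : 𝕜)).comp_hasFPowerSeriesOnBall hf.fderiv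

lemma hasSum_of_hasFPowerSeriesOnBall_ofScalars
    (hf : HasFPowerSeriesOnBall f (ofScalars 𝕜 a) 0 r) (hz : z ∈ Metric.eball 0 r) :
    HasSum (fun n ↦ a n * z ^ n) (f z) := by
  simpa [ofScalars_apply_eq, mul_comm] using hf.hasSum hz

lemma hasSum_mul_pow_of_succ (ha : a 0 = 0) (h : HasSum (fun n ↦ a (n + 1) * z ^ n) s) :
    HasSum (fun n ↦ a n * z ^ n) (z * s) := by
  rw [← hasSum_nat_add_iff' 1]
  simpa [ha, pow_succ', mul_left_comm] using h.mul_left z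

end PowerSeries

section Hypergeometric

variable {𝕂 : Type*} [RCLike 𝕂] (a b c : 𝕂) {z : 𝕂}

open FormalMultilinearSeries

lemma one_le_ordinaryHypergeometricSeries_radius :
    1 ≤ (ordinaryHypergeometricSeries 𝕂 a b c).radius := by
  by_cases h : ∀ k : ℕ, (k : 𝕂) ≠ -a ∧ (k : 𝕂) ≠ -b ∧ (k : 𝕂) ≠ -c
  · exact (ordinaryHypergeometricSeries_radius_eq_one 𝕂 a b c h).ge
  suffices (ordinaryHypergeometricSeries 𝕂 a b c).radius = ⊤ by simp [this]
  obtain ⟨k, hk⟩ := not_forall.1 h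
  obtain rfl | rfl | rfl : a = -k ∨ b = -k ∨ c = -k := by grind
  · exact ordinaryHypergeometric_radius_top_of_neg_nat₁ 𝕂 b c
  · exact ordinaryHypergeometric_radius_top_of_neg_nat₂ 𝕂 a c
  · exact ordinaryHypergeometric_radius_top_of_neg_nat₃ 𝕂 a b

lemma hasFPowerSeriesOnBall_ordinaryHypergeometric :
    HasFPowerSeriesOnBall (₂F₁ a b c : 𝕂 → 𝕂)
      (ofScalars 𝕂 (ordinaryHypergeometricCoefficient a b c)) 0 1 :=
  have hr := one_le_ordinaryHypergeometricSeries_radius a b c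
  (FormalMultilinearSeries.hasFPowerSeriesOnBall _ (one_pos.trans_le hr)).mono one_pos hr

variable {a b c}

lemma ordinaryHypergeometricCoefficient_succ (hc : ∀ k : ℕ, (k : 𝕂) ≠ -c) (n : ℕ) :
    (n + 1) * (n + c) * ordinaryHypergeometricCoefficient a b c (n + 1) =
      (n + a) * (n + b) * ordinaryHypergeometricCoefficient a b c n := by
  have hn : (n + c : 𝕂) ≠ 0 := fun h ↦ hc n (eq_neg_of_add_eq_zero_left h)
  have hn' : (n + 1 : 𝕂) ≠ 0 := n.cast_add_one_ne_zero
  simp only [ordinaryHypergeometricCoefficient, ascPochhammer_succ_eval, Nat.factorial_succ,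
    Nat.cast_mul, Nat.cast_succ, mul_inv, add_comm _ (n : 𝕂)]
  field_simp

lemma differentiableAt_ordinaryHypergeometric (hz : ‖z‖ < 1) :
    DifferentiableAt 𝕂 (₂F₁ a b c) z :=
  ((hasFPowerSeriesOnBall_ordinaryHypergeometric a b c).analyticAt_of_mem
    (mem_eball_zero_one_iff.2 hz)).differentiableAt

lemma differentiableAt_deriv_ordinaryHypergeometric (hz : ‖z‖ < 1) :
    DifferentiableAt 𝕂 (deriv (₂F₁ a b c)) z :=
  ((hasFPowerSeriesOnBall_ordinaryHypergeometric a b c).analyticAt_of_mem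
    (mem_eball_zero_one_iff.2 hz)).deriv.differentiableAt

theorem ordinaryHypergeometric_ode (hc : ∀ k : ℕ, (k : 𝕂) ≠ -c) (hz : ‖z‖ < 1) :
    z * (1 - z) * deriv (deriv (₂F₁ a b c)) z + (c - (a + b + 1) * z) * deriv (₂F₁ a b c) z =
      a * b * ₂F₁ a b c z := by
  set A := ordinaryHypergeometricCoefficient a b c
  have hz := mem_eball_zero_one_iff.2 hz
  have hF := hasFPowerSeriesOnBall_ordinaryHypergeometric a b c
  have hF' := hasFPowerSeriesOnBall_deriv_ofScalars hF
  have hF'' := hasFPowerSeriesOnBall_deriv_ofScalars hF'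
  have s₀ : HasSum (fun n ↦ A n * z ^ n) (₂F₁ a b c z) :=
    hasSum_of_hasFPowerSeriesOnBall_ofScalars hF hz
  have s₁ : HasSum (fun n : ℕ ↦ (n + 1) * A (n + 1) * z ^ n) (deriv (₂F₁ a b c) z) :=
    hasSum_of_hasFPowerSeriesOnBall_ofScalars hF' hz
  have s₂ : HasSum (fun n : ℕ ↦ n * ((n + 1) * A (n + 1)) * z ^ n)
      (z * deriv (deriv (₂F₁ a b c)) z) :=
    hasSum_mul_pow_of_succ (by simp)
      (by simpa using hasSum_of_hasFPowerSeriesOnBall_ofScalars hF'' hz)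
  have t₁ : HasSum (fun n : ℕ ↦ n * A n * z ^ n) (z * deriv (₂F₁ a b c) z) :=
    hasSum_mul_pow_of_succ (by simp) (by simpa using s₁)
  have t₂ : HasSum (fun n : ℕ ↦ n * (n - 1) * A n * z ^ n)
      (z * (z * deriv (deriv (₂F₁ a b c)) z)) :=
    hasSum_mul_pow_of_succ (by simp) (by simpa [mul_assoc, mul_left_comm] using s₂)
  have key := (s₂.sub t₂).add ((s₁.mul_left c).sub (t₁.mul_left (a + b + 1)))
  refine Eq.trans ?_ (key.unique ((s₀.mul_left (a * b)).congr_fun fun n ↦ ?_))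
  · ring
  · linear_combination z ^ n * ordinaryHypergeometricCoefficient_succ (a := a) (b := b) hc n

lemma ordinaryHypergeometric_pos {a b c z : ℝ} (ha : 0 < a) (hb : 0 < b) (hc : 0 < c)
    (hz : z ∈ Set.Ico 0 1) : 0 < ₂F₁ a b c z := by
  have hz_norm : ‖z‖ < 1 := by rw [Real.norm_of_nonneg hz.1]; exact hz.2
  have h_sum := hasSum_of_hasFPowerSeriesOnBall_ofScalars
    (hasFPowerSeriesOnBall_ordinaryHypergeometric a b c) (mem_eball_zero_one_iff.2 hz_norm)
  rw [← h_sum.tsum_eq]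
  refine h_sum.summable.tsum_pos (fun n ↦ ?_) 0 (by simp)
  have := ascPochhammer_pos n a ha
  have := ascPochhammer_pos n b hb
  have := ascPochhammer_pos n c hc
  have := hz.1
  positivity

lemma hyp2F1_eq_ordinaryHypergeometric (a b c z : ℝ) : hyp2F1 a b c z = ₂F₁ a b c z := by
  rw [hyp2F1, ordinaryHypergeometric_eq_tsum]
  refine tsum_congr fun n ↦ ?_
  rw [smul_eq_mul]
  ring

end Hypergeometric

/-- `y`, with derivative `y'`, solves the Sturm–Liouville equation `(P y')' = Q y` on `s`. -/
structure IsSturmLiouvilleSolOn (P Q y y' : ℝ → ℝ) (s : Set ℝ) : Prop where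
  hasDerivAt : ∀ x ∈ s, HasDerivAt y (y' x) x
  hasDerivAt_flux : ∀ x ∈ s, HasDerivAt (fun t ↦ P t * y' t) (Q x * y x) x

namespace IsSturmLiouvilleSolOn

open Set

variable {P Q u u' v v' : ℝ → ℝ} {s : Set ℝ} {a b x : ℝ}

lemma mono (hu : IsSturmLiouvilleSolOn P Q u u' s) {t : Set ℝ} (hts : t ⊆ s) :
    IsSturmLiouvilleSolOn P Q u u' t :=
  ⟨fun x hx ↦ hu.hasDerivAt x (hts hx), fun x hx ↦ hu.hasDerivAt_flux x (hts hx)⟩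

lemma hasDerivAt_wronskian (hu : IsSturmLiouvilleSolOn P Q u u' s)
    (hv : IsSturmLiouvilleSolOn P Q v v' s) (hx : x ∈ s) :
    HasDerivAt (fun t ↦ P t * u' t * v t - P t * v' t * u t) 0 x := by
  refine HasDerivAt.congr_deriv (((hu.hasDerivAt_flux x hx).mul (hv.hasDerivAt x hx)).sub
    ((hv.hasDerivAt_flux x hx).mul (hu.hasDerivAt x hx))) ?_
  ring

lemma wronskian_eq_zero (hu : IsSturmLiouvilleSolOn P Q u u' (Icc a b))
    (hv : IsSturmLiouvilleSolOn P Q v v' (Icc a b)) (hP : P b = 0) (hx : x ∈ Icc a b) :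
    P x * u' x * v x - P x * v' x * u x = 0 := by
  have h_deriv := fun t (ht : t ∈ Icc a b) ↦ hu.hasDerivAt_wronskian hv ht
  have h_const := constant_of_has_deriv_right_zero
    (fun t ht ↦ (h_deriv t ht).continuousAt.continuousWithinAt)
    (fun t ht ↦ (h_deriv t (Ico_subset_Icc_self ht)).hasDerivWithinAt)
  have hb : b ∈ Icc a b := right_mem_Icc.2 (hx.1.trans hx.2)
  simpa [hP] using (h_const x hx).trans (h_const b hb).symm

/-- A zero of `P` at an endpoint is a singular point of the equation, and a solution regular there
is unique up to a constant factor. -/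
lemma div_eq_div_right (hu : IsSturmLiouvilleSolOn P Q u u' (Icc a b))
    (hv : IsSturmLiouvilleSolOn P Q v v' (Icc a b)) (hPb : P b = 0)
    (hP : ∀ t ∈ Ico a b, P t ≠ 0) (hv₀ : ∀ t ∈ Icc a b, v t ≠ 0) (hx : x ∈ Icc a b) :
    u x / v x = u b / v b := by
  have h_deriv := fun t (ht : t ∈ Icc a b) ↦
    (hu.hasDerivAt t ht).div (hv.hasDerivAt t ht) (hv₀ t ht)
  have h_const := constant_of_has_deriv_right_zero
    (fun t ht ↦ (h_deriv t ht).continuousAt.continuousWithinAt)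
    (fun t ht ↦ by
      have ht' := Ico_subset_Icc_self ht
      refine ((h_deriv t ht').congr_deriv ?_).hasDerivWithinAt
      have h_num : u' t * v t - u t * v' t = 0 := by
        apply mul_left_cancel₀ (hP t ht)
        linear_combination hu.wronskian_eq_zero hv hPb ht'
      rw [h_num, zero_div])
  have hb : b ∈ Icc a b := right_mem_Icc.2 (hx.1.trans hx.2)
  exact (h_const x hx).trans (h_const b hb).symm

end IsSturmLiouvilleSolOn

namespace CubicTransform

open Set

/-- The argument `z p = α / (α - 1)` on the left of the transformation, with Ramanujan's
`α = p (3 + p)² / (2 (1 + p)³)`. -/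
noncomputable def sourceArg (p : ℝ) : ℝ := -(p * (3 + p) ^ 2) / ((1 - p) ^ 2 * (2 + p))

/-- The argument `w p = β / (β - 1)` on the right of the transformation, with Ramanujan's
`β = p² (3 + p) / 4`. -/
noncomputable def targetArg (p : ℝ) : ℝ := -(p ^ 2 * (3 + p)) / ((1 - p) * (2 + p) ^ 2)

/-- The factor `m p` relating the values at the two arguments. -/
noncomputable def multiplier (p : ℝ) : ℝ := (2 * (1 - p) / (2 + p)) ^ (1 / 3 : ℝ)

/-- The derivative of `sourceArg`, in factored form. -/
noncomputable def sourceArgDeriv (p : ℝ) : ℝ :=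
  -(6 * (1 + p) ^ 2 * (3 + p)) / ((1 - p) ^ 3 * (2 + p) ^ 2)

/-- The derivative of `targetArg`, in factored form. -/
noncomputable def targetArgDeriv (p : ℝ) : ℝ := -(12 * p) / ((1 - p) ^ 2 * (2 + p) ^ 3)

/-- The coefficient `P` of the common equation `(P y')' = Q y`. Up to a constant it is
`z (1 - z)^(2/3) / z'` at `z = sourceArg p`, as in the self-adjoint form of the hypergeometric
equation. -/
noncomputable def weight (p : ℝ) : ℝ := p * (3 + p) / multiplier p

/-- The coefficient `Q` of the common equation `(P y')' = Q y`. -/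
noncomputable def potential (p : ℝ) : ℝ :=
  -(2 * (1 + p) * (3 + p)) / ((1 - p) ^ 2 * (2 + p) ^ 2 * multiplier p)

variable {p : ℝ}

lemma multiplier_pos (hp : p ∈ Ioo (-2) 1) : 0 < multiplier p := by
  have h₁ : 0 < 1 - p := by linarith [hp.2]
  have h₂ : 0 < 2 + p := by linarith [hp.1]
  exact Real.rpow_pos_of_pos (by positivity) _

lemma hasDerivAt_sourceArg (h₁ : 1 - p ≠ 0) (h₂ : 2 + p ≠ 0) :
    HasDerivAt sourceArg (sourceArgDeriv p) p := by
  have h_id := hasDerivAt_id' p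
  have h_num := (h_id.mul ((h_id.const_add 3).pow 2)).neg
  have h_den := ((h_id.const_sub 1).pow 2).mul (h_id.const_add 2)
  refine (h_num.div h_den (by simp [h₁, h₂])).congr_deriv ?_
  simp only [sourceArgDeriv, Pi.mul_apply, Pi.neg_apply, Pi.pow_apply]
  field_simp
  ring

lemma hasDerivAt_targetArg (h₁ : 1 - p ≠ 0) (h₂ : 2 + p ≠ 0) :
    HasDerivAt targetArg (targetArgDeriv p) p := by
  have h_id := hasDerivAt_id' p
  have h_num := ((h_id.pow 2).mul (h_id.const_add 3)).neg
  have h_den := (h_id.const_sub 1).mul ((h_id.const_add 2).pow 2)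
  refine (h_num.div h_den (by simp [h₁, h₂])).congr_deriv ?_
  simp only [targetArgDeriv, Pi.mul_apply, Pi.neg_apply, Pi.pow_apply]
  field_simp
  ring

lemma hasDerivAt_multiplier (hp : p ∈ Ioo (-2) 1) :
    HasDerivAt multiplier (-(multiplier p / ((1 - p) * (2 + p)))) p := by
  have h₁ : 0 < 1 - p := by linarith [hp.2]
  have h₂ : 0 < 2 + p := by linarith [hp.1]
  have h_base : 0 < 2 * (1 - p) / (2 + p) := by positivity
  have h_id := hasDerivAt_id' p
  have h_quot := ((h_id.const_sub 1).const_mul 2).div (h_id.const_add 2) h₂.ne'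
  refine (h_quot.rpow_const (p := 1 / 3) (Or.inl h_base.ne')).congr_deriv ?_
  simp only [multiplier, Pi.div_apply]
  rw [Real.rpow_sub_one h_base.ne']
  field_simp
  ring

lemma hasDerivAt_weight (hp : p ∈ Ioo (-2) 1) :
    HasDerivAt weight
      ((3 + 2 * p + p * (3 + p) / ((1 - p) * (2 + p))) / multiplier p) p := by
  have hm := (multiplier_pos hp).ne'
  have h_id := hasDerivAt_id' p
  refine ((h_id.mul (h_id.const_add 3)).div (hasDerivAt_multiplier hp) hm).congr_deriv ?_
  simp only [Pi.mul_apply]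
  field_simp
  ring

lemma hasDerivAt_weight_mul_source {y' : ℝ → ℝ} {y₀ y₂ : ℝ} (hp : p ∈ Ioo (-2) 1)
    (hy' : HasDerivAt y' y₂ (sourceArg p))
    (h_ode : sourceArg p * (1 - sourceArg p) * y₂ + (1 - 5 / 3 * sourceArg p) * y' (sourceArg p) =
      1 / 9 * y₀) :
    HasDerivAt (fun t ↦ weight t * (y' (sourceArg t) * sourceArgDeriv t)) (potential p * y₀) p := by
  have hm := (multiplier_pos hp).ne'
  have h₁ : 1 - p ≠ 0 := by linarith [hp.2]
  have h₂ : 2 + p ≠ 0 := by linarith [hp.1]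
  have h_id := hasDerivAt_id' p
  have h_num := (((h_id.const_add 1).pow 2).const_mul 6 |>.mul (h_id.const_add 3)).neg
  have h_den := ((h_id.const_sub 1).pow 3).mul ((h_id.const_add 2).pow 2)
  have h_argDeriv : HasDerivAt sourceArgDeriv _ p := h_num.div h_den (by simp [h₁, h₂])
  have h_comp := hy'.comp p (hasDerivAt_sourceArg h₁ h₂)
  refine ((hasDerivAt_weight hp).mul (h_comp.mul h_argDeriv)).congr_deriv ?_
  simp only [Function.comp_apply, Pi.mul_apply, Pi.neg_apply, Pi.pow_apply, weight, potential,
    sourceArgDeriv]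
  generalize y' (sourceArg p) = y₁ at h_ode ⊢
  unfold sourceArg at h_ode
  linear_combination (norm := (field_simp; ring))
    -(18 * (1 + p) * (3 + p)) / ((1 - p) ^ 2 * (2 + p) ^ 2 * multiplier p) * h_ode

lemma hasDerivAt_weight_mul_target {y y' : ℝ → ℝ} {y₂ : ℝ} (hp : p ∈ Ioo (-2) 1)
    (hy : HasDerivAt y (y' (targetArg p)) (targetArg p)) (hy' : HasDerivAt y' y₂ (targetArg p))
    (h_ode : targetArg p * (1 - targetArg p) * y₂ + (1 - 5 / 3 * targetArg p) * y' (targetArg p) =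
      1 / 9 * y (targetArg p)) :
    HasDerivAt (fun t ↦ weight t * (multiplier t *
        (y' (targetArg t) * targetArgDeriv t - y (targetArg t) / ((1 - t) * (2 + t)))))
      (potential p * (multiplier p * y (targetArg p))) p := by
  have hm := (multiplier_pos hp).ne'
  have h₁ : 1 - p ≠ 0 := by linarith [hp.2]
  have h₂ : 2 + p ≠ 0 := by linarith [hp.1]
  have h_id := hasDerivAt_id' p
  have h_den := ((h_id.const_sub 1).pow 2).mul ((h_id.const_add 2).pow 3)
  have h_argDeriv : HasDerivAt targetArgDeriv _ p :=
    (h_id.const_mul 12).neg.div h_den (by simp [h₁, h₂])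
  have h_arg := hasDerivAt_targetArg h₁ h₂
  have h_quot := (hy.comp p h_arg).div ((h_id.const_sub 1).mul (h_id.const_add 2))
    (mul_ne_zero h₁ h₂)
  refine ((hasDerivAt_weight hp).mul ((hasDerivAt_multiplier hp).mul
    (((hy'.comp p h_arg).mul h_argDeriv).sub h_quot))).congr_deriv ?_
  simp only [Function.comp_apply, Pi.mul_apply, Pi.div_apply, Pi.sub_apply, Pi.neg_apply,
    Pi.pow_apply, weight, potential, targetArgDeriv]
  generalize y (targetArg p) = y₀ at h_ode ⊢
  generalize y' (targetArg p) = y₁ at h_ode ⊢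
  unfold targetArg at h_ode
  linear_combination (norm := (field_simp; ring))
    -(36 * p) / ((1 - p) ^ 2 * (2 + p) ^ 2) * h_ode

lemma one_sub_sourceArg (h₁ : 1 - p ≠ 0) (h₂ : 2 + p ≠ 0) :
    1 - sourceArg p = 2 * (1 + p) ^ 3 / ((1 - p) ^ 2 * (2 + p)) := by
  unfold sourceArg
  field_simp
  ring

lemma one_sub_targetArg (h₁ : 1 - p ≠ 0) (h₂ : 2 + p ≠ 0) :
    1 - targetArg p = 4 / ((1 - p) * (2 + p) ^ 2) := by
  unfold targetArg
  field_simp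
  ring

lemma sourceArg_mem_Ico (hp : p ∈ Ioc (-1) 0) : sourceArg p ∈ Ico 0 1 := by
  have h₀ : 0 < 1 + p := by linarith [hp.1]
  have h₁ : 0 < 1 - p := by linarith [hp.2]
  have h₂ : 0 < 2 + p := by linarith
  refine ⟨div_nonneg ?_ (by positivity), ?_⟩
  · nlinarith [hp.2, sq_nonneg (3 + p)]
  · have : 0 < 1 - sourceArg p := by rw [one_sub_sourceArg h₁.ne' h₂.ne']; positivity
    linarith

lemma targetArg_mem_Ioc (hp : p ∈ Ioc (-1) 0) : targetArg p ∈ Ioc (-1) 0 := by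
  have h₀ : 0 < 1 + p := by linarith [hp.1]
  have h₁ : 0 < 1 - p := by linarith [hp.2]
  have h₂ : 0 < 2 + p := by linarith
  have h₃ : 0 < 3 + p := by linarith
  constructor
  · have h_factor : 2 < (1 - p) * (2 + p) ^ 2 := by
      have : 0 < (1 + p) * (2 - 2 * p - p ^ 2) := mul_pos h₀ (by nlinarith [hp.1, hp.2])
      linarith
    have : 1 - targetArg p < 2 := by
      rw [one_sub_targetArg h₁.ne' h₂.ne', div_lt_iff₀ (by positivity)]
      linarith
    linarith
  · rw [targetArg, neg_div, neg_nonpos]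
    positivity

local notation "F" => (₂F₁ (1 / 3 : ℝ) (1 / 3 : ℝ) (1 : ℝ) : ℝ → ℝ)

lemma ordinaryHypergeometric_third_ode {z : ℝ} (hz : ‖z‖ < 1) :
    z * (1 - z) * deriv (deriv F) z + (1 - 5 / 3 * z) * deriv F z = 1 / 9 * F z := by
  have h_ode := ordinaryHypergeometric_ode (a := 1 / 3) (b := 1 / 3) (c := 1)
    (fun k ↦ (neg_one_lt_zero.trans_le k.cast_nonneg).ne') hz
  linear_combination h_ode

lemma isSturmLiouvilleSolOn_source :
    IsSturmLiouvilleSolOn weight potential (fun p ↦ F (sourceArg p))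
      (fun p ↦ deriv F (sourceArg p) * sourceArgDeriv p) (Ioc (-1) 0) := by
  have h_norm {p : ℝ} (hp : p ∈ Ioc (-1) 0) : ‖sourceArg p‖ < 1 := by
    rw [Real.norm_of_nonneg (sourceArg_mem_Ico hp).1]
    exact (sourceArg_mem_Ico hp).2
  refine ⟨fun p hp ↦ ?_, fun p hp ↦ ?_⟩
  · exact (differentiableAt_ordinaryHypergeometric (h_norm hp)).hasDerivAt.comp p
      (hasDerivAt_sourceArg (by linarith [hp.2]) (by linarith [hp.1]))
  · exact hasDerivAt_weight_mul_source ⟨by linarith [hp.1], by linarith [hp.2]⟩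
      (differentiableAt_deriv_ordinaryHypergeometric (h_norm hp)).hasDerivAt
      (ordinaryHypergeometric_third_ode (h_norm hp))

lemma isSturmLiouvilleSolOn_target :
    IsSturmLiouvilleSolOn weight potential (fun p ↦ multiplier p * F (targetArg p))
      (fun p ↦ multiplier p *
        (deriv F (targetArg p) * targetArgDeriv p - F (targetArg p) / ((1 - p) * (2 + p))))
      (Ioc (-1) 0) := by
  have h_norm {p : ℝ} (hp : p ∈ Ioc (-1) 0) : ‖targetArg p‖ < 1 := by
    rw [Real.norm_of_nonpos (targetArg_mem_Ioc hp).2]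
    linarith [(targetArg_mem_Ioc hp).1]
  have h_dom {p : ℝ} (hp : p ∈ Ioc (-1) 0) : p ∈ Ioo (-2) 1 :=
    ⟨by linarith [hp.1], by linarith [hp.2]⟩
  have h_deriv {p : ℝ} (hp : p ∈ Ioc (-1) 0) :=
    (differentiableAt_ordinaryHypergeometric (a := 1 / 3) (b := 1 / 3) (c := 1)
      (h_norm hp)).hasDerivAt
  refine ⟨fun p hp ↦ ?_, fun p hp ↦ ?_⟩
  · have h_arg := hasDerivAt_targetArg (p := p) (by linarith [hp.2]) (by linarith [hp.1])
    refine ((hasDerivAt_multiplier (h_dom hp)).mul ((h_deriv hp).comp p h_arg)).congr_deriv ?_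
    simp only [Function.comp_apply]
    ring
  · exact hasDerivAt_weight_mul_target (h_dom hp) (h_deriv hp)
      (differentiableAt_deriv_ordinaryHypergeometric (h_norm hp)).hasDerivAt
      (ordinaryHypergeometric_third_ode (h_norm hp))

theorem ordinaryHypergeometric_sourceArg (hp : p ∈ Ioc (-1) 0) :
    F (sourceArg p) = multiplier p * F (targetArg p) := by
  have h_sub : Icc p 0 ⊆ Ioc (-1) 0 := Icc_subset_Ioc_iff hp.2 |>.2 ⟨hp.1, le_rfl⟩
  have h_pos : ∀ t ∈ Icc p 0, F (sourceArg t) ≠ 0 := fun t ht ↦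
    (ordinaryHypergeometric_pos (by norm_num) (by norm_num) one_pos
      (sourceArg_mem_Ico (h_sub ht))).ne'
  have h_weight : ∀ t ∈ Ico p 0, weight t ≠ 0 := fun t ht ↦ by
    have h_dom : t ∈ Ioo (-2) 1 := ⟨by linarith [hp.1, ht.1], by linarith [ht.2]⟩
    exact div_ne_zero (mul_ne_zero ht.2.ne (by linarith [h_dom.1])) (multiplier_pos h_dom).ne'
  have h_ratio := (isSturmLiouvilleSolOn_target.mono h_sub).div_eq_div_right
    (isSturmLiouvilleSolOn_source.mono h_sub) (by simp [weight]) h_weight h_pos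
    (left_mem_Icc.2 hp.2)
  have h_zero : multiplier 0 * F (targetArg 0) / F (sourceArg 0) = 1 := by
    simp [multiplier, targetArg, sourceArg]
  exact (eq_of_div_eq_one (h_ratio.trans h_zero)).symm

lemma one_sub_sqrt_three_sub_two : 1 - (√3 - 2) = √3 * (√3 - 1) := by
  linear_combination -(Real.sq_sqrt (zero_le_three (α := ℝ)))

lemma sqrt_three_sub_one_pos : 0 < √3 - 1 := by
  rw [sub_pos, Real.lt_sqrt zero_le_one]
  norm_num

lemma sourceArg_sqrt_three_sub_two : sourceArg (√3 - 2) = (√3 + 2) / (3 * √3) := by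
  have h_sq : √3 ^ 2 = 3 := Real.sq_sqrt zero_le_three
  have h_pos := sqrt_three_sub_one_pos
  rw [sourceArg, one_sub_sqrt_three_sub_two, add_sub_cancel,
    div_eq_div_iff (by positivity) (by positivity)]
  grind

lemma targetArg_sqrt_three_sub_two : targetArg (√3 - 2) = (√3 - 2) / (3 * √3) := by
  have h_sq : √3 ^ 2 = 3 := Real.sq_sqrt zero_le_three
  have h_pos := sqrt_three_sub_one_pos
  rw [targetArg, one_sub_sqrt_three_sub_two, add_sub_cancel,
    div_eq_div_iff (by positivity) (by positivity)]
  grind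

lemma multiplier_sqrt_three_sub_two :
    multiplier (√3 - 2) = 2 ^ (1 / 3 : ℝ) * (√3 - 1) ^ (1 / 3 : ℝ) := by
  rw [multiplier, one_sub_sqrt_three_sub_two, add_sub_cancel,
    ← Real.mul_rpow zero_le_two sqrt_three_sub_one_pos.le, mul_left_comm,
    mul_div_cancel_left₀ _ (by positivity)]

end CubicTransform

/-- Ratio of ₂F₁(1/3,1/3;1;·) at conjugate arguments. -/
theorem conjugate_argument_ratio :
    hyp2F1 (1/3) (1/3) 1 ((Real.sqrt 3 + 2) / (3 * Real.sqrt 3)) =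
      (2:ℝ) ^ ((1:ℝ)/3) * (Real.sqrt 3 - 1) ^ ((1:ℝ)/3) *
        hyp2F1 (1/3) (1/3) 1 ((Real.sqrt 3 - 2) / (3 * Real.sqrt 3)) := by
  have hp : √3 - 2 ∈ Set.Ioc (-1) 0 := by
    constructor <;> nlinarith [Real.sq_sqrt (zero_le_three (α := ℝ)), Real.sqrt_nonneg 3]
  rw [hyp2F1_eq_ordinaryHypergeometric, hyp2F1_eq_ordinaryHypergeometric,
    ← CubicTransform.sourceArg_sqrt_three_sub_two, ← CubicTransform.targetArg_sqrt_three_sub_two,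
    ← CubicTransform.multiplier_sqrt_three_sub_two]
  exact CubicTransform.ordinaryHypergeometric_sourceArg hp
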